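/- Let X = A + iB, where A and B are bounded self-adjoint operators on H and A is positive and invertible, and let λ ≥ 0. Then X + λI is invertible, (X + λI)^{-1} = (A + λI)^{-1/2}(I + C_λ²)^{-1}(I − iC_λ)(A + λI)^{-1/2} where C_λ := (A + λI)^{-1/2} B (A + λI)^{-1/2}, and Re{(X + λI)^{-1}} = (A + λI)^{-1/2}(I + C_λ²)^{-1}(A + λI)^{-1/2}, which is positive and invertible. -/

import Mathlib

open ContinuousLinearMap MeasureTheory

variable {H : Type*} [NormedAddCommGroup H] [InnerProductSpace ℂ H] [CompleteSpace H]

/-- The real part `(Y + Y*)/2` of a bounded operator. -/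
noncomputable def opRe (Y : H →L[ℂ] H) : H →L[ℂ] H := (2 : ℂ)⁻¹ • (Y + star Y)

/-- The inverse square root `T^{-1/2}` of a (positive invertible) operator, via the
continuous functional calculus. -/
noncomputable def invSqrt (T : H →L[ℂ] H) : H →L[ℂ] H := cfc (fun x : ℝ => (Real.sqrt x)⁻¹) T

theorem aux_alg {E : Type*} [Ring E] (S R P Q D Z : E) (hSR : S * R = 1) (hRS : R * S = 1)
    (hPQ : P * Q = D) (hQP : Q * P = D) (hZQ : Z * Q = Q * Z) (hDZ : D * Z = 1) (hZD : Z * D = 1) :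
    (R * P * R) * (S * Z * Q * S) = 1 ∧ (S * Z * Q * S) * (R * P * R) = 1 := by
  constructor
  · calc (R * P * R) * (S * Z * Q * S) = R * P * (R * S) * (Z * Q) * S := by noncomm_ring
      _ = R * (P * Q * Z) * S := by rw [hRS, hZQ]; noncomm_ring
      _ = 1 := by rw [hPQ, hDZ, mul_one, hRS]
  · calc (S * Z * Q * S) * (R * P * R) = S * Z * Q * (S * R) * P * R := by noncomm_ring
      _ = S * (Z * (Q * P)) * R := by rw [hSR]; noncomm_ring
      _ = 1 := by rw [hQP, hZD, mul_one, hSR]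

theorem aux_sqrt (T : H →L[ℂ] H) (hT : IsStrictlyPositive T) :
    IsSelfAdjoint (invSqrt T) ∧ ∃ R : H →L[ℂ] H, invSqrt T * R = 1 ∧ R * invSqrt T = 1 ∧
      R * R = T := by
  have hsa : IsSelfAdjoint T := hT.isSelfAdjoint
  have hpos : ∀ x ∈ spectrum ℝ T, 0 < x := by
    intro x hx
    have h0 : 0 ≤ x := spectrum_nonneg_of_nonneg hT.nonneg hx
    refine lt_of_le_of_ne h0 ?_
    rintro rfl
    exact spectrum.zero_notMem ℝ hT.isUnit hx
  have hc1 : ContinuousOn (fun x : ℝ => Real.sqrt x) (spectrum ℝ T) := by fun_prop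
  have hc2 : ContinuousOn (fun x : ℝ => (Real.sqrt x)⁻¹) (spectrum ℝ T) :=
    hc1.inv₀ fun x hx => (Real.sqrt_pos.2 (hpos x hx)).ne'
  refine ⟨cfc_predicate _ _, cfc (fun x : ℝ => Real.sqrt x) T, ?_, ?_, ?_⟩
  · rw [invSqrt, ← cfc_mul _ _ T hc2 hc1, ← cfc_one ℝ T]
    exact cfc_congr fun x hx => inv_mul_cancel₀ (Real.sqrt_pos.2 (hpos x hx)).ne'
  · rw [invSqrt, ← cfc_mul _ _ T hc1 hc2, ← cfc_one ℝ T]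
    exact cfc_congr fun x hx => mul_inv_cancel₀ (Real.sqrt_pos.2 (hpos x hx)).ne'
  · rw [← cfc_mul _ _ T hc1 hc1]
    conv_rhs => rw [← cfc_id ℝ T]
    exact cfc_congr fun x hx => Real.mul_self_sqrt (hpos x hx).le

/-- For `X = A + iB` with `A` positive and invertible and `λ ≥ 0`: `X + λI` is invertible,
`(X+λI)⁻¹ = (A+λI)^{-1/2}(I+C_λ²)⁻¹(I−iC_λ)(A+λI)^{-1/2}` with
`C_λ = (A+λI)^{-1/2} B (A+λI)^{-1/2}`, and
`Re (X+λI)⁻¹ = (A+λI)^{-1/2}(I+C_λ²)⁻¹(A+λI)^{-1/2}`, which is positive and invertible. -/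
theorem stmt16 [TopologicalSpace.SeparableSpace H] (hinf : ¬ FiniteDimensional ℂ H)
    (l : ℝ) (hl : 0 ≤ l)
    (A B X S C : H →L[ℂ] H) (hA : IsSelfAdjoint A) (hB : IsSelfAdjoint B)
    (hApos : A.IsPositive) (hAU : IsUnit A)
    (hX : X = A + Complex.I • B)
    (hS : S = invSqrt (A + (l : ℂ) • 1)) (hC : C = S * B * S) :
    IsUnit (X + (l : ℂ) • 1) ∧
    Ring.inverse (X + (l : ℂ) • 1) =
      S * Ring.inverse (1 + C ^ 2) * (1 - Complex.I • C) * S ∧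
    opRe (Ring.inverse (X + (l : ℂ) • 1)) = S * Ring.inverse (1 + C ^ 2) * S ∧
    (S * Ring.inverse (1 + C ^ 2) * S).IsPositive ∧
    IsUnit (S * Ring.inverse (1 + C ^ 2) * S) := by
  have hT : IsStrictlyPositive (A + (l : ℂ) • (1 : H →L[ℂ] H)) := by
    have h1 : IsStrictlyPositive A :=
      ⟨(ContinuousLinearMap.nonneg_iff_isPositive A).2 hApos, hAU⟩
    refine h1.add_nonneg ?_
    rw [Complex.coe_smul]
    exact smul_nonneg hl zero_le_one
  obtain ⟨hSsa, R, hSR, hRS, hRR⟩ := aux_sqrt _ hT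
  rw [← hS] at hSsa hSR hRS
  have hCsa : IsSelfAdjoint C := by
    have h : star C = C := by
      rw [hC, star_mul, star_mul, hSsa.star_eq, hB.star_eq, mul_assoc]
    exact h
  have hD : IsStrictlyPositive (1 + C ^ 2) := by
    have h1 : IsStrictlyPositive (1 : H →L[ℂ] H) := ⟨zero_le_one, isUnit_one⟩
    exact h1.add_nonneg hCsa.sq_nonneg
  have hZ := hD.ringInverse
  have hDZ := Ring.mul_inverse_cancel _ hD.isUnit
  have hZD := Ring.inverse_mul_cancel _ hD.isUnit
  generalize Ring.inverse (1 + C ^ 2) = Z at *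
  have hZC : Z * C = C * Z := by
    calc Z * C = Z * C * ((1 + C ^ 2) * Z) := by rw [hDZ, mul_one]
      _ = Z * (1 + C ^ 2) * C * Z := by noncomm_ring
      _ = C * Z := by rw [hZD, one_mul]
  have hII : ∀ Y : H →L[ℂ] H, Complex.I • Complex.I • Y = - Y := by
    intro Y
    rw [smul_smul, Complex.I_mul_I, neg_one_smul]
  have hPQ : (1 + Complex.I • C) * (1 - Complex.I • C) = 1 + C ^ 2 := by
    simp only [mul_sub, add_mul, one_mul, mul_one, smul_mul_assoc, mul_smul_comm, smul_add, smul_sub, hII, sq]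
    abel
  have hQP : (1 - Complex.I • C) * (1 + Complex.I • C) = 1 + C ^ 2 := by
    simp only [mul_add, sub_mul, one_mul, mul_one, smul_mul_assoc, mul_smul_comm, smul_add, smul_sub, hII, sq]
    abel
  have hZQ : Z * (1 - Complex.I • C) = (1 - Complex.I • C) * Z := by
    simp only [mul_sub, sub_mul, one_mul, mul_one, smul_mul_assoc, mul_smul_comm, hZC]
  have hRCR : R * C * R = B := by
    calc R * C * R = (R * S) * B * (S * R) := by rw [hC]; noncomm_ring
      _ = B := by rw [hRS, hSR, one_mul, mul_one]
  have hXl : X + (l : ℂ) • 1 = R * (1 + Complex.I • C) * R := by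
    simp only [mul_add, add_mul, mul_one, smul_mul_assoc, mul_smul_comm, hRCR, hRR, hX]
    abel
  obtain ⟨h1, h2⟩ := aux_alg S R _ _ _ Z hSR hRS hPQ hQP hZQ hDZ hZD
  rw [← hXl] at h1 h2
  have hinv : Ring.inverse (X + (l : ℂ) • 1) = S * Z * (1 - Complex.I • C) * S :=
    Ring.inverse_unit ⟨_, _, h1, h2⟩
  have hZsa : star Z = Z := hZ.isSelfAdjoint.star_eq
  have hSU : IsUnit S := ⟨⟨S, R, hSR, hRS⟩, rfl⟩
  refine ⟨⟨⟨_, _, h1, h2⟩, rfl⟩, hinv, ?_, ?_, (hSU.mul hZ.isUnit).mul hSU⟩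
  · rw [hinv, opRe]
    have hst : star (S * Z * (1 - Complex.I • C) * S) = S * Z * (1 + Complex.I • C) * S := by
      simp only [star_mul, star_sub, star_one, star_smul, hSsa.star_eq, hZsa, hCsa.star_eq,
        Complex.star_def, Complex.conj_I, neg_smul, sub_neg_eq_add]
      simp only [mul_add, add_mul, one_mul, mul_one, smul_mul_assoc, mul_smul_comm, mul_assoc]
      rw [← mul_assoc C Z S, ← hZC, mul_assoc]
    rw [hst]
    have : S * Z * (1 - Complex.I • C) * S + S * Z * (1 + Complex.I • C) * S
        = (2 : ℂ) • (S * Z * S) := by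
      rw [two_smul]
      noncomm_ring
    rw [this, smul_smul, inv_mul_cancel₀ two_ne_zero, one_smul]
  · rw [← ContinuousLinearMap.nonneg_iff_isPositive]
    exact hSsa.conjugate_nonneg hZ.nonneg
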